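/- Let A = {0,1,2} and N = 10, and for K ≥ 0 let m(K) denote the minimum, over all subsets Y of A^{N+K} of cardinality 3^N = 59049, of the average (1/3^N) · Σ_{y ∈ Y} I(y) of the empirical information content of the strings in Y, where for a string s of length L the empirical information content is I(s) = −Σ_{j=1}^{L} log₂(n_{s_j}/L) and n_a is the number of occurrences of the symbol a in s (with m(0) equal to the average of I over all of A^N). Then m(1) < m(0); that is, there is a set of 3^{10} strings of length 11 over A whose average empirical information content is strictly smaller than the average empirical information content of all 3^{10} strings of length 10 over A, so a bijection f : A^{10} → Y onto this set lengthens every string while strictly decreasing average information content. -/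

import Mathlib

open Finset

/-- Empirical information content of a string `s` of length `L` over an alphabet `A`:
`I(s) = -∑_{j=1}^{L} log₂ (n_{s_j} / L)`, where `n_a` is the number of occurrences
of the symbol `a` in `s`. -/
noncomputable def info {A : Type*} [DecidableEq A] {L : ℕ} (s : Fin L → A) : ℝ :=
  -∑ j : Fin L, Real.logb 2 (((univ.filter fun i => s i = s j).card : ℝ) / L)

/-- `m K` is the minimum, over all subsets `Y` of `A^{10+K}` (with `A = {0,1,2}`)
of cardinality `3^10`, of the average empirical information content
`(1/3^10) · ∑_{y ∈ Y} I(y)`. -/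
noncomputable def m (K : ℕ) : ℝ :=
  ((univ : Finset (Fin (10 + K) → Fin 3)).powersetCard (3 ^ 10)).inf'
    (Finset.powersetCard_nonempty.mpr
      (by
        simp only [Finset.card_univ, Fintype.card_fun, Fintype.card_fin]
        exact Nat.pow_le_pow_right (by norm_num) (by omega)))
    (fun Y => (∑ y ∈ Y, info y) / 3 ^ 10)


/-- `⌊100 n log₂ n⌋` for `n ≤ 11`. -/
def lowTab (n : ℕ) : ℤ :=
  ([0, 0, 200, 475, 800, 1160, 1550, 1965, 2400, 2852, 3321, 3805] : List ℤ).getD n 0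

/-- Number of occurrences of `a` in `s`. -/
def cnt {L : ℕ} (s : Fin L → Fin 3) (a : Fin 3) : ℕ := (univ.filter fun i => s i = a).card

lemma cnt_le {L : ℕ} (s : Fin L → Fin 3) (a : Fin 3) : cnt s a ≤ L := by
  unfold cnt
  exact (card_le_univ _).trans (by simp)

lemma sum_cnt {L : ℕ} (s : Fin L → Fin 3) : cnt s 0 + cnt s 1 + cnt s 2 = L := by
  have h := card_eq_sum_card_fiberwise (f := s) (s := univ) (t := univ) (by simp)
  simp only [card_univ, Fintype.card_fin, Fin.sum_univ_three] at h
  unfold cnt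
  exact h.symm

lemma info_eq {L : ℕ} (hL : 0 < L) (s : Fin L → Fin 3) :
    info s = L * Real.logb 2 L - (cnt s 0 * Real.logb 2 (cnt s 0)
      + cnt s 1 * Real.logb 2 (cnt s 1) + cnt s 2 * Real.logb 2 (cnt s 2)) := by
  have h1 : ∑ j : Fin L, Real.logb 2 (((univ.filter fun i => s i = s j).card : ℝ) / L)
      = ∑ a : Fin 3, (cnt s a : ℝ) * Real.logb 2 ((cnt s a : ℝ) / L) := by
    rw [← sum_fiberwise univ s]
    refine sum_congr rfl fun a _ => ?_
    rw [sum_congr rfl (g := fun _ => Real.logb 2 ((cnt s a : ℝ) / L))]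
    · rw [sum_const, nsmul_eq_mul]; rfl
    · intro j hj
      rw [(mem_filter.mp hj).2]; rfl
  have h2 : ∀ c : ℕ, (c : ℝ) * Real.logb 2 ((c : ℝ) / L)
      = c * Real.logb 2 c - c * Real.logb 2 L := by
    intro c
    rcases Nat.eq_zero_or_pos c with rfl | hc
    · simp
    · rw [Real.logb_div (by positivity) (by positivity)]; ring
  have h3 : (L : ℝ) = cnt s 0 + cnt s 1 + cnt s 2 := by exact_mod_cast (sum_cnt s).symm
  unfold info
  rw [h1, Fin.sum_univ_three, h2, h2, h2]
  linear_combination (-Real.logb 2 L) * h3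

lemma tab_aux (n : ℕ) (hn : 0 < n) (p : ℕ) (h1 : 2 ^ p ≤ n ^ (100 * n))
    (h2 : n ^ (100 * n) ≤ 2 ^ (p + 1)) :
    (p : ℝ) ≤ 100 * (n * Real.logb 2 n) ∧ 100 * (n * Real.logb 2 n) ≤ p + 1 := by
  have e : 100 * (n * Real.logb 2 n) = Real.logb 2 ((n : ℝ) ^ (100 * n)) := by
    rw [Real.logb_pow]; push_cast; ring
  have hp : ∀ q : ℕ, (q : ℝ) = Real.logb 2 ((2 : ℝ) ^ q) := by
    intro q; rw [Real.logb_pow]; simp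
  have hn' : (0 : ℝ) < n := by exact_mod_cast hn
  rw [e]
  constructor
  · rw [hp p]
    exact Real.logb_le_logb_of_le (by norm_num) (by positivity) (by exact_mod_cast h1)
  · have := hp (p + 1)
    push_cast at this
    rw [this]
    exact Real.logb_le_logb_of_le (by norm_num) (by positivity) (by exact_mod_cast h2)

set_option exponentiation.threshold 100000 in
lemma tab (n : ℕ) (hn : n ≤ 11) :
    (lowTab n : ℝ) ≤ 100 * (n * Real.logb 2 n) ∧ 100 * (n * Real.logb 2 n) ≤ lowTab n + 1 := by
  rcases Nat.eq_zero_or_pos n with rfl | h0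
  · simp [lowTab]
  · have key : ∀ p : ℕ, (lowTab n = p) → 2 ^ p ≤ n ^ (100 * n) → n ^ (100 * n) ≤ 2 ^ (p + 1) →
        (lowTab n : ℝ) ≤ 100 * (n * Real.logb 2 n) ∧
        100 * (n * Real.logb 2 n) ≤ lowTab n + 1 := by
      intro p hp a b
      have := tab_aux n h0 p a b
      rw [hp]; exact_mod_cast this
    refine key (lowTab n).toNat ?_ ?_ ?_ <;> clear key <;> interval_cases n <;> decide +kernel

/-- Monomial functional. -/
noncomputable def functional (F : ℕ → ℕ → ℕ → ℤ) : MvPolynomial (Fin 3) ℤ →ₗ[ℤ] ℤ :=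
  (MvPolynomial.basisMonomials (Fin 3) ℤ).constr ℤ fun k => F (k 0) (k 1) (k 2)

lemma functional_mon (F : ℕ → ℕ → ℕ → ℤ) (a b c : ℕ) :
    functional F (MvPolynomial.X 0 ^ a * MvPolynomial.X 1 ^ b * MvPolynomial.X 2 ^ c)
      = F a b c := by
  have : (MvPolynomial.X 0 ^ a * MvPolynomial.X 1 ^ b * MvPolynomial.X 2 ^ c :
      MvPolynomial (Fin 3) ℤ) = MvPolynomial.basisMonomials (Fin 3) ℤ
        (Finsupp.single 0 a + Finsupp.single 1 b + Finsupp.single 2 c) := by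
    simp [MvPolynomial.X_pow_eq_monomial, MvPolynomial.monomial_mul]
  rw [this, functional, Module.Basis.constr_basis]
  simp

/-- Sum over all strings of a function of the symbol counts, as a multinomial sum. -/
def W (n : ℕ) (F : ℕ → ℕ → ℕ → ℤ) : ℤ :=
  ∑ a ∈ range (n + 1), ∑ b ∈ range (n - a + 1),
    ((n.choose a * (n - a).choose b : ℕ) : ℤ) * F a b (n - a - b)

lemma sum_strings (n : ℕ) (F : ℕ → ℕ → ℕ → ℤ) :
    ∑ s : Fin n → Fin 3, F (cnt s 0) (cnt s 1) (cnt s 2) = W n F := by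
  have hL : functional F ((∑ i : Fin 3, (MvPolynomial.X i : MvPolynomial (Fin 3) ℤ)) ^ n)
      = ∑ s : Fin n → Fin 3, F (cnt s 0) (cnt s 1) (cnt s 2) := by
    rw [Fintype.sum_pow, map_sum]
    refine sum_congr rfl fun s _ => ?_
    rw [← functional_mon F]
    congr 1
    rw [← prod_fiberwise univ s, Fin.prod_univ_three]
    have : ∀ a : Fin 3, ∏ i with s i = a, (MvPolynomial.X (s i) : MvPolynomial (Fin 3) ℤ)
        = MvPolynomial.X a ^ cnt s a := by
      intro a
      rw [cnt, ← prod_const]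
      exact prod_congr rfl fun i hi => by rw [(mem_filter.mp hi).2]
    rw [this, this, this]
  rw [← hL, Fin.sum_univ_three, add_assoc, add_pow, map_sum, W]
  refine sum_congr rfl fun a _ => ?_
  rw [add_pow, mul_sum, sum_mul, map_sum]
  refine sum_congr rfl fun b _ => ?_
  rw [← functional_mon F, ← smul_eq_mul (α := ℤ), ← map_smul]
  congr 1
  rw [zsmul_eq_mul]
  push_cast
  ring

/-- Scaled lower bound for the information content, length 10. -/
def lo10 (a b c : ℕ) : ℤ := lowTab 10 - (lowTab a + lowTab b + lowTab c + 3)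

/-- Scaled upper bound for the information content, length 11. -/
def hi11 (a b c : ℕ) : ℤ := lowTab 11 + 1 - (lowTab a + lowTab b + lowTab c)

lemma lo10_le (s : Fin 10 → Fin 3) :
    (lo10 (cnt s 0) (cnt s 1) (cnt s 2) : ℝ) ≤ 100 * info s := by
  rw [info_eq (by norm_num)]
  have h := (tab 10 (by norm_num)).1
  have h0 := (tab (cnt s 0) ((cnt_le s 0).trans (by norm_num))).2
  have h1 := (tab (cnt s 1) ((cnt_le s 1).trans (by norm_num))).2
  have h2 := (tab (cnt s 2) ((cnt_le s 2).trans (by norm_num))).2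
  unfold lo10
  push_cast at h ⊢
  linarith

lemma le_hi11 (s : Fin 11 → Fin 3) :
    100 * info s ≤ (hi11 (cnt s 0) (cnt s 1) (cnt s 2) : ℝ) := by
  rw [info_eq (by norm_num)]
  have h := (tab 11 (by norm_num)).2
  have h0 := (tab (cnt s 0) (cnt_le s 0)).1
  have h1 := (tab (cnt s 1) (cnt_le s 1)).1
  have h2 := (tab (cnt s 2) (cnt_le s 2)).1
  unfold hi11
  push_cast at h ⊢
  linarith

/-- The threshold. -/
def thr : ℤ := hi11 2 3 6

lemma card_lt : W 11 (fun a b c => if hi11 a b c < thr then 1 else 0) ≤ 3 ^ 10 := by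
  decide +kernel

lemma card_ge : 3 ^ 10 ≤ W 11 (fun a b c => if hi11 a b c ≤ thr then 1 else 0) := by
  decide +kernel

lemma compare : W 11 (fun a b c => if hi11 a b c < thr then hi11 a b c - thr else 0)
    + 3 ^ 10 * thr < W 10 lo10 := by
  decide +kernel

/-- Abbreviation for the upper bound on a string. -/
def H (s : Fin 11 → Fin 3) : ℤ := hi11 (cnt s 0) (cnt s 1) (cnt s 2)

lemma exists_Y : ∃ Y : Finset (Fin 11 → Fin 3), Y.card = 3 ^ 10 ∧ ∑ y ∈ Y, H y < W 10 lo10 := by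
  have c1 : (univ.filter fun s => H s < thr).card ≤ 3 ^ 10 := by
    have h := card_lt
    rw [← sum_strings, sum_boole] at h
    exact_mod_cast h
  have c2 : 3 ^ 10 ≤ (univ.filter fun s => H s ≤ thr).card := by
    have h := card_ge
    rw [← sum_strings, sum_boole] at h
    exact_mod_cast h
  have hs : (univ.filter fun s => H s < thr) ⊆ (univ.filter fun s => H s ≤ thr) := by
    intro s hs
    simp only [mem_filter, mem_univ, true_and] at hs ⊢
    exact hs.le
  obtain ⟨Y, hY1, hY2, hc⟩ := exists_subsuperset_card_eq hs c1 c2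
  refine ⟨Y, hc, ?_⟩
  have e1 : ∑ y ∈ Y, H y = ∑ y ∈ Y, (H y - thr) + 3 ^ 10 * thr := by
    rw [sum_sub_distrib, sum_const, hc, nsmul_eq_mul]
    push_cast
    ring
  have e2 : ∑ y ∈ Y, (H y - thr) = ∑ y ∈ univ.filter (fun s => H s < thr), (H y - thr) := by
    symm
    refine sum_subset hY1 fun y hy hn => ?_
    have := hY2 hy
    simp only [mem_filter, mem_univ, true_and] at this hn
    omega
  rw [e1, e2, sum_filter]
  have h := compare
  rw [← sum_strings] at h
  exact h

/-- With `A = {0,1,2}` and `N = 10`, shaping with `K = 1` strictly decreases the minimal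
average empirical information content: `m 1 < m 0`. (Note `m 0` is the average of `I` over
all of `A^10`, since the only subset of `A^10` of cardinality `3^10` is `A^10` itself.) -/
theorem stmt_0 : m 1 < m 0 := by
  obtain ⟨Y, hc, hY⟩ := exists_Y
  have h1 : m 1 ≤ (∑ y ∈ Y, info y) / 3 ^ 10 :=
    inf'_le (f := fun Y : Finset (Fin (10 + 1) → Fin 3) => (∑ y ∈ Y, info y) / 3 ^ 10)
      (mem_powersetCard.mpr ⟨subset_univ _, hc⟩)
  refine h1.trans_lt ?_
  unfold m
  rw [lt_inf'_iff]
  intro Z hZ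
  obtain ⟨-, hZc⟩ := mem_powersetCard.mp hZ
  have hZu : Z = univ := by
    rw [← card_eq_iff_eq_univ, hZc]
    simp
  subst hZu
  have a1 : 100 * ∑ y ∈ Y, info y ≤ ((∑ y ∈ Y, H y : ℤ) : ℝ) := by
    rw [mul_sum]
    push_cast
    exact sum_le_sum fun y _ => le_hi11 y
  have a2 : ((W 10 lo10 : ℤ) : ℝ) ≤ 100 * ∑ y : Fin 10 → Fin 3, info y := by
    rw [mul_sum, ← sum_strings]
    push_cast
    exact sum_le_sum fun y _ => lo10_le y
  have a3 : ((∑ y ∈ Y, H y : ℤ) : ℝ) < ((W 10 lo10 : ℤ) : ℝ) := by exact_mod_cast hY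
  have a4 : ∑ y ∈ Y, info y < ∑ y : Fin 10 → Fin 3, info y := by linarith
  exact div_lt_div_of_pos_right a4 (by positivity)
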